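/- An involutive BE algebra X is an implicative-orthomodular algebra (i.e., satisfies x ⊓ (y→x) = x for all x, y) if and only if it satisfies axiom (QW₂): x→(y ⊓ (z ⊓ x)) = (x→y) ⊓ (x→z) for all x, y, z ∈ X. -/

import Mathlib

/-!
Write `x ⊕ y := x* → y`. In an involutive BE algebra `⊕` is commutative and associative, and
`x ⊓ y = ((x ⊕ y*)* ⊕ y*)*`.

(QW₂) ⇒ (IOM): putting `y = 0` in (QW₂) gives `x* = x* ⊓ (x → z)`, and `x → z = z* → x*`.

(IOM) ⇒ (QW₂): say that `q` extends `x` if `q = x ⊕ r` for some `r`. Under (IOM) negation reverses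
this relation (`IOM.neg_extends`), and if `q` extends `x` then the complement is explicit:
`q = x ⊕ (x ⊕ q*)*` (`IOM.add_complement`). Replacing `x` by `x*`, (QW₂) reads
`x ⊕ (y ⊓ (z ⊓ x*)) = (x ⊕ y) ⊓ (x ⊕ z)`. With `v` its right-hand side, unfolding the left-hand side
turns it into `x ⊕ (x ⊕ v*)*`, so (QW₂) holds as soon as `v` extends `x`. This is the lemma
`IOM.inf_extends`, a consequence of the fact that negation reverses the relation.
-/

/-- An involutive BE algebra `(X, →, 0, 1)`. -/
structure InvBE (X : Type*) where
  imp : X → X → X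
  one : X
  zero : X
  imp_self : ∀ x, imp x x = one
  imp_one : ∀ x, imp x one = one
  one_imp : ∀ x, imp one x = x
  exchange : ∀ x y z, imp x (imp y z) = imp y (imp x z)
  zero_imp : ∀ x, imp zero x = one
  imp_involutive : ∀ x, imp (imp x zero) zero = x

namespace InvBE

variable {X : Type*} (A : InvBE X)

/-- `x* := x → 0`. -/
def neg (x : X) : X := A.imp x A.zero

/-- `x ⊓ y := ((x* → y*) → y*)*`. -/
def inf (x y : X) : X := A.neg (A.imp (A.imp (A.neg x) (A.neg y)) (A.neg y))

/-- `x ∪ y := (x → y) → y`. -/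
def sup (x y : X) : X := A.imp (A.imp x y) y

/-- `x ⊙ y := (x → y*)*`. -/
def odot (x y : X) : X := A.neg (A.imp x (A.neg y))

/-- `x ⊕ y := (x* ⊙ y*)*`. -/
def oplus (x y : X) : X := A.neg (A.odot (A.neg x) (A.neg y))

/-- `x ≤_Q y` iff `x = x ⊓ y`. -/
def leQ (x y : X) : Prop := x = A.inf x y

/-- `x ≤ y` iff `x → y = 1`. -/
def le (x y : X) : Prop := A.imp x y = A.one

/-- (IOM): `x ⊓ (y → x) = x` for all `x, y`. -/
def IOM : Prop := ∀ x y, A.inf x (A.imp y x) = x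

/-- (QW): `x → ((x ⊓ y) ⊓ (z ⊓ x)) = (x → y) ⊓ (x → z)` for all `x, y, z`. -/
def QW : Prop :=
  ∀ x y z, A.imp x (A.inf (A.inf x y) (A.inf z x)) = A.inf (A.imp x y) (A.imp x z)

/-- A filter: nonempty, closed under `⊙`, upward closed for `≤_Q`. -/
def IsFilter (F : Set X) : Prop :=
  F.Nonempty ∧ (∀ x ∈ F, ∀ y ∈ F, A.odot x y ∈ F) ∧
    (∀ x ∈ F, ∀ y : X, A.leQ x y → y ∈ F)

/-- A deductive system: contains `1` and is closed under modus ponens. -/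
def IsDS (F : Set X) : Prop :=
  A.one ∈ F ∧ ∀ x y : X, x ∈ F → A.imp x y ∈ F → y ∈ F

/-- `pow x n` is the `⊙`-product of `n + 1` copies of `x`, i.e. `x^(n+1)`. -/
def pow (x : X) : ℕ → X
  | 0 => x
  | n + 1 => A.odot x (pow x n)

/-- A maximal filter: proper and not contained in any other proper filter. -/
def IsMaximalFilter (F : Set X) : Prop :=
  A.IsFilter F ∧ F ≠ Set.univ ∧
    ∀ G : Set X, A.IsFilter G → F ⊆ G → G ≠ Set.univ → G = F

/-- A strongly maximal filter: for every `x ∉ F` there is `n ≥ 1` with `(xⁿ)* ∈ F`. -/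
def IsStronglyMaximalFilter (F : Set X) : Prop :=
  A.IsFilter F ∧ ∀ x : X, x ∉ F → ∃ n : ℕ, A.neg (A.pow x n) ∈ F

/-- `x ≡_F y` iff there is `f` with `x, y ≤_Q f` and `f → x, f → y ∈ F`. -/
def cong (F : Set X) (x y : X) : Prop :=
  ∃ f : X, A.leQ x f ∧ A.leQ y f ∧ A.imp f x ∈ F ∧ A.imp f y ∈ F

end InvBE

namespace InvBE

variable {X : Type*} (A : InvBE X)

/-- The sum `x ⊕ y`, in the form `x* → y`; it equals `A.oplus x y`. -/
def add (x y : X) : X := A.imp (A.neg x) y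

theorem neg_neg' (x : X) : A.neg (A.neg x) = x := A.imp_involutive x

theorem imp_eq_add (x y : X) : A.imp x y = A.add (A.neg x) y := by
  rw [add, neg_neg']

theorem contrapose (x y : X) : A.imp x y = A.imp (A.neg y) (A.neg x) := by
  conv_lhs => rw [← A.neg_neg' y]
  exact A.exchange x (A.neg y) A.zero

theorem add_comm' (x y : X) : A.add x y = A.add y x := by
  rw [add, contrapose, neg_neg', add]

theorem add_left_comm' (x y z : X) : A.add x (A.add y z) = A.add y (A.add x z) :=
  A.exchange _ _ _

theorem add_assoc' (x y z : X) : A.add (A.add x y) z = A.add x (A.add y z) := by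
  rw [add_comm', add_left_comm', add_comm' A z y]

theorem inf_eq (x y : X) :
    A.inf x y = A.neg (A.add (A.neg (A.add x (A.neg y))) (A.neg y)) := by
  rw [inf, imp_eq_add A (A.imp _ _)]; rfl

theorem zero_inf (x : X) : A.inf A.zero x = A.zero := by
  have h0 : A.neg A.zero = A.one := A.imp_self _
  rw [inf, h0, A.one_imp, A.imp_self, neg, A.one_imp]

variable {A}

/-- Negation reverses the relation `∃ r, q = x ⊕ r`, with an explicit complement. -/
theorem IOM.neg_add (h : A.IOM) (x y : X) :
    A.neg x = A.add (A.neg (A.add x y)) (A.neg (A.add x (A.neg (A.add x y)))) := by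
  have e := congrArg A.neg (h x (A.neg y))
  rw [inf_eq, neg_neg', imp_eq_add, neg_neg', add_comm' A y x] at e
  rw [← e, add_comm']

theorem IOM.neg_extends (h : A.IOM) {x q : X} (hq : ∃ r, q = A.add x r) :
    ∃ s, A.neg x = A.add (A.neg q) s := by
  obtain ⟨r, rfl⟩ := hq
  exact ⟨_, h.neg_add x r⟩

theorem IOM.add_complement (h : A.IOM) {x q : X} (hq : ∃ r, q = A.add x r) :
    A.add x (A.neg (A.add x (A.neg q))) = q := by
  obtain ⟨s, hs⟩ := h.neg_extends hq
  have e := h.neg_add (A.neg q) s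
  rw [← hs, neg_neg', neg_neg', add_comm' A (A.neg q) x] at e
  exact e.symm

/-- If `a` and `u` both extend `x`, then so does `a ⊓ u`. -/
theorem IOM.inf_extends (h : A.IOM) {x a u : X} (ha : ∃ r, a = A.add x r)
    (hu : ∃ r, u = A.add x r) : ∃ r, A.inf a u = A.add x r := by
  -- `x*` extends `u*`, hence `x* = u* ⊕ (u* ⊕ x)*`
  have hx := h.add_complement (h.neg_extends hu)
  rw [neg_neg'] at hx
  -- `u* ⊕ a` extends `u* ⊕ x`, so `(u* ⊕ x)*` extends `(u* ⊕ a)*`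
  obtain ⟨s, hs⟩ : ∃ s, A.neg (A.add (A.neg u) x) = A.add (A.neg (A.add (A.neg u) a)) s := by
    obtain ⟨r, rfl⟩ := ha
    exact h.neg_extends ⟨r, (add_assoc' A _ _ _).symm⟩
  -- therefore `x*` extends `u* ⊕ (u* ⊕ a)* = (a ⊓ u)*`
  have hv : A.neg x = A.add (A.neg (A.inf a u)) s := by
    rw [inf_eq, neg_neg', add_comm' A a, add_comm' A _ (A.neg u), add_assoc', ← hs, hx]
  obtain ⟨r, hr⟩ := h.neg_extends ⟨s, hv⟩
  exact ⟨r, by simpa only [neg_neg'] using hr⟩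

theorem IOM.add_inf (h : A.IOM) (x y z : X) :
    A.add x (A.inf y (A.inf z (A.neg x))) = A.inf (A.add x y) (A.add x z) := by
  rw [← h.add_complement (h.inf_extends (x := x) ⟨y, rfl⟩ ⟨z, rfl⟩)]
  simp only [inf_eq, neg_neg', add_assoc' A, add_comm' A, add_left_comm' A]

end InvBE

/-- An involutive BE algebra is an IOM algebra iff it satisfies (QW₂):
`x → (y ⊓ (z ⊓ x)) = (x → y) ⊓ (x → z)`. -/
theorem stmt_8 {X : Type*} (A : InvBE X) :
    A.IOM ↔
      ∀ x y z : X, A.imp x (A.inf y (A.inf z x)) = A.inf (A.imp x y) (A.imp x z) := by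
  constructor
  · intro h x y z
    have e := h.add_inf (A.neg x) y z
    rwa [A.neg_neg', ← A.imp_eq_add, ← A.imp_eq_add, ← A.imp_eq_add] at e
  · intro h x y
    have e := h (A.neg x) A.zero (A.neg y)
    rw [A.zero_inf, ← A.contrapose] at e
    change A.neg (A.neg x) = A.inf (A.neg (A.neg x)) _ at e
    rw [A.neg_neg'] at e
    exact e.symm
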